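/- arXiv:quant-ph/0702073 — 3 statements merged into one kernel-verified Lean document; each statement's English description precedes it below -/
import Mathlib

section
/- For every N ≥ 1, the Krawtchouk matrices satisfy K^(N+1) · B^(N+1) = r( K^(N) · B^(N) ⊗ H ); equivalently, since B^(N+1) is invertible over ℚ, K^(N+1) = r( K^(N) · B^(N) ⊗ H ) · (B^(N+1))^{−1}. Here H = [[1,1],[1,−1]], ⊗ is the Kronecker product with entries (A ⊗ H)_{2i+s, 2j+t} = A_{ij}·H_{st} for s,t ∈ {0,1}, and r is the square contraction. -/
/-!
Column `j` of `K^(N)` lists the coefficients of `(1 - X)^j (1 + X)^(N - j)`. Multiplying this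
generating function by `1 + X` or by `1 - X` gives the two recursions `kraw_succ_same`
and `kraw_succ_succ`, which express `K^(N+1)` through `K^(N)`. Writing `A = K^(N) B^(N)`, the
contraction of `A ⊗ H` at `(i, j)` is `A_{i,j} + A_{i-1,j} + A_{i,j-1} - A_{i-1,j-1}`. In terms of
generating functions this is
`C(N,j) (1 + X) · (1 - X)^j (1 + X)^(N-j) + C(N,j-1) (1 - X) · (1 - X)^(j-1) (1 + X)^(N-j+1)`,
and Pascal's rule `C(N,j) + C(N,j-1) = C(N+1,j)` finishes the computation. The entries
that the contraction cuts off at the boundary vanish: those with `j = N + 1` because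
`C(N, N+1) = 0`, and those with `i = N + 1` because the generating function has degree at
most `N`.
-/

/-- The `(i,j)` entry of the `N`-th Krawtchouk matrix:
`K^(N)_{ij} = ∑_k (−1)^k C(j,k) C(N−j, i−k)`. -/
def kraw (N i j : ℕ) : ℤ :=
  ∑ k ∈ Finset.range (i + 1), (-1 : ℤ) ^ k * (j.choose k) * ((N - j).choose (i - k))

/-- Entry of a `2n × 2n` matrix `M` (given by its entries on `0,…,2n−1`) at an
integer position, taken to be `0` outside the range `{0,…,2n−1}`. -/
def mget (n : ℕ) (M : ℕ → ℕ → ℚ) (a b : ℤ) : ℚ :=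
  if 0 ≤ a ∧ a < 2 * n ∧ 0 ≤ b ∧ b < 2 * n then M a.toNat b.toNat else 0

/-- The square contraction of a `2n × 2n` matrix `M`:
`(rM)_{ij} = ∑_{a ∈ {2i−1, 2i}} ∑_{b ∈ {2j−1, 2j}} M_{ab}` for `0 ≤ i,j ≤ n`,
where out-of-range entries of `M` count as zero. -/
def contraction (n : ℕ) (M : ℕ → ℕ → ℚ) (i j : ℕ) : ℚ :=
  mget n M (2 * i - 1) (2 * j - 1) + mget n M (2 * i - 1) (2 * j)
    + mget n M (2 * i) (2 * j - 1) + mget n M (2 * i) (2 * j)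

/-- Entries of the fundamental Hadamard matrix `H = [[1,1],[1,−1]]` on indices `{0,1}`. -/
def Hent (s t : ℕ) : ℚ := if s = 1 ∧ t = 1 then -1 else 1

/-- Kronecker product with `H`: `(A ⊗ H)_{2i+s, 2j+t} = A_{ij} H_{st}` for `s,t ∈ {0,1}`. -/
def kronH (A : ℕ → ℕ → ℚ) (a b : ℕ) : ℚ := A (a / 2) (b / 2) * Hent (a % 2) (b % 2)

/-- The `N`-th Krawtchouk matrix over `ℚ`. -/
def Kmat (N : ℕ) : Matrix (Fin (N + 1)) (Fin (N + 1)) ℚ :=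
  Matrix.of fun i j => (kraw N i j : ℚ)

/-- The diagonal matrix of binomial coefficients `B^(N)_{ii} = C(N,i)`, over `ℚ`. -/
def Bmat (N : ℕ) : Matrix (Fin (N + 1)) (Fin (N + 1)) ℚ :=
  Matrix.diagonal fun i => (N.choose i : ℚ)

/-- `r(K^(N) B^(N) ⊗ H)` as an `(N+2)×(N+2)` matrix over `ℚ`. -/
def rKB (N : ℕ) : Matrix (Fin (N + 2)) (Fin (N + 2)) ℚ :=
  Matrix.of fun i j =>
    contraction (N + 1) (kronH fun a b => (kraw N a b : ℚ) * (N.choose b : ℚ)) i j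

open Polynomial in
/-- The generating function of a column of the Krawtchouk matrix. For `j > N` the truncated
exponent `N - j = 0` matches the truncation in `kraw`, so no bound on `j` is needed. -/
lemma kraw_eq_coeff (N i j : ℕ) :
    kraw N i j = ((1 - X) ^ j * (1 + X) ^ (N - j) : ℤ[X]).coeff i := by
  have h (k : ℕ) : ((1 - X) ^ j : ℤ[X]).coeff k = (-1) ^ k * (j.choose k) := by
    have e : ((1 - X) ^ j : ℤ[X]) = ((1 + X) ^ j : ℤ[X]).comp (C (-1) * X) := by
      simp [sub_eq_add_neg]
    rw [e, comp_C_mul_X_coeff, coeff_one_add_X_pow, mul_comm]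
  rw [coeff_mul, Finset.Nat.sum_antidiagonal_eq_sum_range_succ_mk, kraw]
  exact Finset.sum_congr rfl fun k _ => by rw [h, coeff_one_add_X_pow]

lemma kraw_zero (N j : ℕ) : kraw N 0 j = 1 := by
  simp [kraw]

/-- Multiplication of the generating function by `1 + X`. -/
lemma kraw_succ_same (N i j : ℕ) (hj : j ≤ N) :
    kraw (N + 1) (i + 1) j = kraw N (i + 1) j + kraw N i j := by
  simp only [kraw_eq_coeff]
  rw [Nat.succ_sub hj, pow_succ, ← mul_assoc, mul_add, mul_one, Polynomial.coeff_add,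
    Polynomial.coeff_mul_X]

/-- Multiplication of the generating function by `1 - X`. -/
lemma kraw_succ_succ (N i j : ℕ) :
    kraw (N + 1) (i + 1) (j + 1) = kraw N (i + 1) j - kraw N i j := by
  simp only [kraw_eq_coeff]
  rw [Nat.add_sub_add_right, pow_succ, mul_right_comm, mul_sub, mul_one, Polynomial.coeff_sub,
    Polynomial.coeff_mul_X]

/-- The generating function has degree at most `N`. -/
lemma kraw_eq_zero (N j : ℕ) (hj : j ≤ N) : kraw N (N + 1) j = 0 := by
  rw [kraw]
  refine Finset.sum_eq_zero fun k _ => ?_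
  rcases le_or_gt k j with h | h
  · rw [Nat.choose_eq_zero_of_lt (show N - j < N + 1 - k by omega)]
    simp
  · simp [Nat.choose_eq_zero_of_lt h]

lemma mget_natCast (n : ℕ) (M : ℕ → ℕ → ℚ) (a b : ℕ) :
    mget n M a b = if a < 2 * n ∧ b < 2 * n then M a b else 0 := by
  unfold mget
  exact if_congr (by omega) rfl rfl

lemma mget_neg_left (n : ℕ) (M : ℕ → ℕ → ℚ) (b : ℤ) : mget n M (-1) b = 0 := by
  simp [mget]

lemma mget_neg_right (n : ℕ) (M : ℕ → ℕ → ℚ) (a : ℤ) : mget n M a (-1) = 0 := by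
  simp [mget]

/-- If `A` vanishes on the `n`-th row and column, truncating `A ⊗ H` to size `2n` has no effect on
the positions `(2i + s, 2j + t)` with `i, j ≤ n`. -/
lemma mget_kronH (n : ℕ) (A : ℕ → ℕ → ℚ) (hr : ∀ j ≤ n, A n j = 0) (hc : ∀ i ≤ n, A i n = 0)
    (i j s t : ℕ) (hi : i ≤ n) (hj : j ≤ n) (hs : s < 2) (ht : t < 2) (a b : ℤ)
    (ha : a = 2 * i + s) (hb : b = 2 * j + t) :
    mget n (kronH A) a b = A i j * Hent s t := by
  obtain rfl : a = ((2 * i + s : ℕ) : ℤ) := by push_cast; exact ha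
  obtain rfl : b = ((2 * j + t : ℕ) : ℤ) := by push_cast; exact hb
  rw [mget_natCast, kronH, show (2 * i + s) / 2 = i by omega, show (2 * j + t) / 2 = j by omega,
    show (2 * i + s) % 2 = s by omega, show (2 * j + t) % 2 = t by omega]
  split_ifs with h
  · rfl
  · rcases (by omega : i = n ∨ j = n) with rfl | rfl
    · simp [hr j hj]
    · simp [hc i hi]

lemma kraw_mul_choose (N i j : ℕ) (hi : i ≤ N + 1) (hj : j ≤ N + 1) :
    (kraw (N + 1) i j : ℚ) * ((N + 1).choose j : ℚ) =
      contraction (N + 1) (kronH fun a b => (kraw N a b : ℚ) * (N.choose b : ℚ)) i j := by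
  have key := mget_kronH (N + 1) (fun a b => (kraw N a b : ℚ) * (N.choose b : ℚ))
    (fun j hj => by
      rcases hj.eq_or_lt with rfl | h
      · simp
      · simp [kraw_eq_zero N j (by omega)])
    (fun i _ => by simp)
  -- At `j = N + 1` the recursion `kraw_succ_same` fails, but its weight `C(N, j)` is zero.
  have same (i j : ℕ) : (kraw (N + 1) (i + 1) j : ℚ) * (N.choose j : ℚ) =
      (kraw N (i + 1) j + kraw N i j) * (N.choose j : ℚ) := by
    rcases le_or_gt j N with h | h
    · rw [kraw_succ_same N i j h]; push_cast; rfl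
    · simp [Nat.choose_eq_zero_of_lt h]
  -- The entries at positions (even, even), (even, odd), (odd, even), (odd, odd).
  have ee (i j : ℕ) (hi : i ≤ N + 1) (hj : j ≤ N + 1) :=
    key i j 0 0 hi hj (by omega) (by omega) (2 * i) (2 * j) (by simp) (by simp)
  have eo (i j : ℕ) (hi : i ≤ N + 1) (hj : j + 1 ≤ N + 1) :=
    key i j 0 1 hi (by omega) (by omega) (by omega) (2 * i) (2 * (j + 1 : ℕ) - 1)
      (by simp) (by push_cast; ring)
  have oe (i j : ℕ) (hi : i + 1 ≤ N + 1) (hj : j ≤ N + 1) :=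
    key i j 1 0 (by omega) hj (by omega) (by omega) (2 * (i + 1 : ℕ) - 1) (2 * j)
      (by push_cast; ring) (by simp)
  have oo (i j : ℕ) (hi : i + 1 ≤ N + 1) (hj : j + 1 ≤ N + 1) :=
    key i j 1 1 (by omega) (by omega) (by omega) (by omega)
      (2 * (i + 1 : ℕ) - 1) (2 * (j + 1 : ℕ) - 1) (by push_cast; ring) (by push_cast; ring)
  have neg : 2 * ((0 : ℕ) : ℤ) - 1 = -1 := by norm_num
  unfold contraction
  rw [ee i j hi hj]
  rcases i with _ | i <;> rcases j with _ | j
  · rw [neg, mget_neg_left, mget_neg_left, mget_neg_right]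
    simp [kraw_zero, Hent]
  · rw [neg, mget_neg_left, mget_neg_left, eo 0 j hi hj]
    simp [kraw_zero, Hent, Nat.choose_succ_succ]
  · rw [neg, mget_neg_right, mget_neg_right, oe i 0 hi hj]
    have h := same i 0
    simp only [Nat.choose_zero_right, Nat.cast_one, mul_one] at h ⊢
    simp only [h, Hent]
    norm_num
    ring
  · rw [oo i j hi hj, oe i (j + 1) hi hj, eo (i + 1) j hi hj]
    have h := same i (j + 1)
    have h' : (kraw (N + 1) (i + 1) (j + 1) : ℚ) = kraw N (i + 1) j - kraw N i j := by
      rw [kraw_succ_succ]; push_cast; rfl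
    rw [Nat.choose_succ_succ, Nat.cast_add, mul_add, h, h']
    simp [Hent]
    ring

/-- The Krawtchouk matrices satisfy `K^(N+1) B^(N+1) = r(K^(N) B^(N) ⊗ H)`; equivalently,
since `B^(N+1)` is invertible over `ℚ`, `K^(N+1) = r(K^(N) B^(N) ⊗ H) (B^(N+1))⁻¹`. -/
theorem krawtchouk_recursion (N : ℕ) (hN : 1 ≤ N) :
    Kmat (N + 1) * Bmat (N + 1) = rKB N ∧ Kmat (N + 1) = rKB N * (Bmat (N + 1))⁻¹ := by
  have h : Kmat (N + 1) * Bmat (N + 1) = rKB N := by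
    ext i j
    rw [Bmat, Matrix.mul_diagonal]
    exact kraw_mul_choose N i j (by omega) (by omega)
  refine ⟨h, ?_⟩
  rw [← h, Matrix.mul_nonsing_inv_cancel_right]
  rw [Bmat, Matrix.det_diagonal, isUnit_iff_ne_zero, Finset.prod_ne_zero_iff]
  intro i _
  exact_mod_cast (Nat.choose_pos (by omega)).ne'
end

section
/- For every N ≥ 1, the spectrum of the Kac matrix A^(N), viewed as a matrix over ℚ, is exactly the set {N − 2i : i = 0, 1, …, N} = {N, N−2, …, 2−N, −N}. -/
/-!
Identify a vector `v` with the polynomial `p = ∑ v_j X^j` of degree at most `N`. The Kac matrix then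
acts as the differential operator `p ↦ (1 - X²) p' + N X p`, for which `(1 - X)^i (1 + X)^(N - i)` is
an eigenvector with eigenvalue `N - 2 i` (`kacPoly_ode`, `kac_mulVec_kacPoly`). This yields `N + 1`
distinct roots of the characteristic polynomial, whose degree is `N + 1`, so there are no others.
-/

/-- The Kac matrix over `ℚ`: `A^(N)_{i,i+1} = i+1`, `A^(N)_{i+1,i} = N−i`,
all other entries zero. -/
def Kac (N : ℕ) : Matrix (Fin (N + 1)) (Fin (N + 1)) ℚ :=
  Matrix.of fun i j =>
    if (i : ℕ) + 1 = (j : ℕ) then ((i : ℕ) + 1 : ℚ)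
    else if (j : ℕ) + 1 = (i : ℕ) then (N : ℚ) - (j : ℕ)
    else 0

open Polynomial in
/-- The generating polynomial `(1 - X)^i (1 + X)^m` of an eigenvector of `Kac (i + m)`. -/
noncomputable def kacPoly (i m : ℕ) : ℚ[X] := (1 - X) ^ i * (1 + X) ^ m

open Polynomial in
theorem mul_derivative_pow_self (q : ℚ[X]) (i : ℕ) :
    q * derivative (q ^ i) = (i : ℚ[X]) * derivative q * q ^ i := by
  cases i with
  | zero => simp
  | succ n => rw [derivative_pow_succ, pow_succ]; simp; ring

open Polynomial in
/-- `kacPoly i m` is an eigenvector of `p ↦ (1 - X²) p' + N X p`, where `N = i + m`. -/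
theorem kacPoly_ode (i m : ℕ) :
    derivative (kacPoly i m) + (((i + m : ℕ) : ℚ[X]) * (X * kacPoly i m)
      - X * (X * derivative (kacPoly i m))) = ((m : ℚ[X]) - (i : ℚ[X])) * kacPoly i m := by
  have h1 := mul_derivative_pow_self (1 - X) i
  have h2 := mul_derivative_pow_self (1 + X) m
  have e1 : derivative (1 - X : ℚ[X]) = -1 := by simp
  have e2 : derivative (1 + X : ℚ[X]) = 1 := by simp
  rw [e1] at h1
  rw [e2] at h2
  unfold kacPoly
  rw [derivative_mul]
  push_cast
  linear_combination (1 + X) * (1 + X) ^ m * h1 + (1 - X) * (1 - X) ^ i * h2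

open Polynomial in
theorem kacPoly_natDegree_le (i m : ℕ) : (kacPoly i m).natDegree ≤ i + m := by
  unfold kacPoly
  compute_degree

open Polynomial in
theorem kacPoly_coeff_zero (i m : ℕ) : (kacPoly i m).coeff 0 = 1 := by
  simp [kacPoly, coeff_zero_eq_eval_zero]

open Polynomial in
theorem coeff_X_mul_derivative (p : ℚ[X]) (j : ℕ) :
    (X * derivative p).coeff j = j * p.coeff j := by
  cases j with
  | zero => simp
  | succ n => rw [coeff_X_mul, coeff_derivative]; push_cast; ring

/-- The three-term recurrence for the coefficients of `kacPoly`. -/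
theorem kacPoly_coeff_succ (i m j : ℕ) :
    ((j : ℚ) + 1 + 1) * (kacPoly i m).coeff (j + 2)
      + (((i + m : ℕ) : ℚ) - j) * (kacPoly i m).coeff j
      = ((m : ℚ) - i) * (kacPoly i m).coeff (j + 1) := by
  have h := congrArg (fun p : Polynomial ℚ => Polynomial.coeff p (j + 1)) (kacPoly_ode i m)
  simp only [Polynomial.coeff_add, Polynomial.coeff_sub, Polynomial.coeff_natCast_mul, sub_mul,
    Polynomial.coeff_X_mul, coeff_X_mul_derivative, Polynomial.coeff_derivative] at h
  push_cast at h ⊢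
  linear_combination h

theorem kacPoly_coeff_one (i m : ℕ) :
    (kacPoly i m).coeff 1 = ((m : ℚ) - i) * (kacPoly i m).coeff 0 := by
  have h := congrArg (fun p : Polynomial ℚ => Polynomial.coeff p 0) (kacPoly_ode i m)
  simp only [Polynomial.coeff_add, Polynomial.coeff_sub, Polynomial.coeff_natCast_mul, sub_mul,
    Polynomial.coeff_X_mul_zero, Polynomial.coeff_derivative] at h
  push_cast at h ⊢
  linear_combination h

theorem kac_mulVec_kacPoly (i m : ℕ) :
    (Kac (i + m)).mulVec (fun k => (kacPoly i m).coeff k)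
      = ((m : ℚ) - i) • fun k : Fin (i + m + 1) => (kacPoly i m).coeff k := by
  ext ⟨j, hj⟩
  simp only [Matrix.mulVec, dotProduct, Kac, Matrix.of_apply, Pi.smul_apply, smul_eq_mul]
  rw [Fin.sum_univ_eq_sum_range (fun k => (if j + 1 = k then ((j : ℚ) + 1)
    else if k + 1 = j then ((i + m : ℕ) : ℚ) - k else 0) * (kacPoly i m).coeff k)]
  have hsplit : ∀ k : ℕ, (if j + 1 = k then ((j : ℚ) + 1)
      else if k + 1 = j then ((i + m : ℕ) : ℚ) - k else 0) * (kacPoly i m).coeff k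
      = (if j + 1 = k then ((j : ℚ) + 1) * (kacPoly i m).coeff k else 0)
        + (if k + 1 = j then (((i + m : ℕ) : ℚ) - k) * (kacPoly i m).coeff k else 0) := by
    intro k
    split_ifs <;> first | omega | simp
  simp only [hsplit, Finset.sum_add_distrib]
  -- In the last row the superdiagonal entry is missing, but so is the coefficient of degree `N + 1`.
  have hup : ∑ k ∈ Finset.range (i + m + 1),
      (if j + 1 = k then ((j : ℚ) + 1) * (kacPoly i m).coeff k else 0)
      = ((j : ℚ) + 1) * (kacPoly i m).coeff (j + 1) := by
    rw [Finset.sum_ite_eq]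
    split_ifs with h
    · rfl
    · rw [Polynomial.coeff_eq_zero_of_natDegree_lt, mul_zero]
      have := kacPoly_natDegree_le i m
      rw [Finset.mem_range] at h
      omega
  rw [hup]
  cases j with
  | zero => simp [kacPoly_coeff_one]
  | succ n =>
    simp only [Nat.add_right_cancel_iff]
    rw [Finset.sum_ite_eq', if_pos (Finset.mem_range.2 (by omega)), ← kacPoly_coeff_succ]
    push_cast
    ring

theorem kac_isRoot_charpoly (N i : ℕ) (hi : i ≤ N) :
    (Kac N).charpoly.IsRoot ((N : ℚ) - 2 * i) := by
  obtain ⟨m, rfl⟩ := Nat.exists_eq_add_of_le hi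
  have hval : ((i + m : ℕ) : ℚ) - 2 * i = (m : ℚ) - i := by push_cast; ring
  rw [hval, ← Matrix.mem_spectrum_iff_isRoot_charpoly, ← Matrix.spectrum_toLin',
    ← Module.End.hasEigenvalue_iff_mem_spectrum]
  refine Module.End.hasEigenvalue_of_hasEigenvector
    (x := fun k : Fin (i + m + 1) => (kacPoly i m).coeff k) ⟨?_, ?_⟩
  · rw [Module.End.mem_eigenspace_iff, Matrix.toLin'_apply, kac_mulVec_kacPoly]
  · intro h
    have h0 := congrFun h 0
    simp [kacPoly_coeff_zero] at h0

/-- The spectrum of the Kac matrix over `ℚ` is `{N − 2i : 0 ≤ i ≤ N}`. -/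
theorem kac_spectrum (N : ℕ) (hN : 1 ≤ N) :
    spectrum ℚ (Kac N) = {x : ℚ | ∃ i : ℕ, i ≤ N ∧ x = (N : ℚ) - 2 * i} := by
  have hne : (Kac N).charpoly ≠ 0 := (Matrix.charpoly_monic _).ne_zero
  have hinj : Function.Injective fun i : ℕ => (N : ℚ) - 2 * i := by
    intro a b h
    have h' : (a : ℚ) = b := by
      simp only at h
      linarith
    exact_mod_cast h'
  have heq : (Finset.range (N + 1)).image (fun i : ℕ => (N : ℚ) - 2 * i)
      = (Kac N).charpoly.roots.toFinset := by
    apply Finset.eq_of_subset_of_card_le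
    · intro x hx
      obtain ⟨i, hi, rfl⟩ := Finset.mem_image.1 hx
      rw [Multiset.mem_toFinset, Polynomial.mem_roots hne]
      exact kac_isRoot_charpoly N i (by rw [Finset.mem_range] at hi; omega)
    · rw [Finset.card_image_of_injective _ hinj, Finset.card_range]
      refine (Multiset.toFinset_card_le _).trans ((Polynomial.card_roots' _).trans ?_)
      rw [Matrix.charpoly_natDegree_eq_dim, Fintype.card_fin]
  ext x
  rw [Matrix.mem_spectrum_iff_isRoot_charpoly, ← Polynomial.mem_roots hne, ← Multiset.mem_toFinset,
    ← heq]
  simp only [Finset.mem_image, Finset.mem_range, Nat.lt_succ_iff, Set.mem_ofPred_eq, eq_comm]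
end

section
/- For every N ≥ 1, let Ā = (1/2)·(A^(N)·Λ^(N) − Λ^(N)·A^(N)) over ℚ. Then the triple A^(N), Ā, Λ^(N) satisfies the commutation relations [A^(N), Ā] = 2·Λ^(N), [Ā, Λ^(N)] = 2·A^(N), and [Λ^(N), A^(N)] = −2·Ā, where [X,Y] = XY − YX; hence their span is a Lie algebra isomorphic to sl(2,ℝ). -/
/-- The diagonal matrix `Λ^(N)` with `Λ^(N)_{ii} = N − 2i`, over `ℚ`. -/
def Lam (N : ℕ) : Matrix (Fin (N + 1)) (Fin (N + 1)) ℚ :=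
  Matrix.diagonal fun i => (N : ℚ) - 2 * (i : ℕ)

/-- The skew-symmetric companion `Ā = ½ [A, Λ]`. -/
def Abar (N : ℕ) : Matrix (Fin (N + 1)) (Fin (N + 1)) ℚ :=
  (1 / 2 : ℚ) • (Kac N * Lam N - Lam N * Kac N)

/-- The superdiagonal part of the Kac matrix. -/
def kacUp (N : ℕ) : Matrix (Fin (N + 1)) (Fin (N + 1)) ℚ :=
  Matrix.of fun i j => if (i : ℕ) + 1 = (j : ℕ) then ((i : ℕ) + 1 : ℚ) else 0

/-- The subdiagonal part of the Kac matrix. -/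
def kacDown (N : ℕ) : Matrix (Fin (N + 1)) (Fin (N + 1)) ℚ :=
  Matrix.of fun i j => if (j : ℕ) + 1 = (i : ℕ) then (N : ℚ) - (j : ℕ) else 0

lemma kac_eq_up_add_down (N : ℕ) : Kac N = kacUp N + kacDown N := by
  ext i j
  simp only [Kac, kacUp, kacDown, Matrix.of_apply, Matrix.add_apply]
  split_ifs <;> first | omega | simp

lemma kacUp_comm_lam (N : ℕ) : kacUp N * Lam N - Lam N * kacUp N = (-2 : ℚ) • kacUp N := by
  ext i j
  simp only [Lam, kacUp, Matrix.sub_apply, Matrix.mul_diagonal, Matrix.diagonal_mul,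
    Matrix.of_apply, Matrix.smul_apply, smul_eq_mul]
  split_ifs with h
  · rw [← h]; push_cast; ring
  · ring

lemma kacDown_comm_lam (N : ℕ) :
    kacDown N * Lam N - Lam N * kacDown N = (2 : ℚ) • kacDown N := by
  ext i j
  simp only [Lam, kacDown, Matrix.sub_apply, Matrix.mul_diagonal, Matrix.diagonal_mul,
    Matrix.of_apply, Matrix.smul_apply, smul_eq_mul]
  split_ifs with h
  · rw [← h]; push_cast; ring
  · ring

lemma kacUp_mul_kacDown (N : ℕ) :
    kacUp N * kacDown N =
      Matrix.diagonal fun i : Fin (N + 1) => ((i : ℕ) + 1 : ℚ) * ((N : ℚ) - (i : ℕ)) := by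
  ext i j
  rw [Matrix.mul_apply, Matrix.diagonal_apply]
  simp only [kacUp, kacDown, Matrix.of_apply]
  by_cases hi : (i : ℕ) < N
  · rw [Finset.sum_eq_single (⟨i + 1, by omega⟩ : Fin (N + 1))]
    · by_cases hij : i = j
      · subst hij; simp
      · have : (j : ℕ) ≠ i := fun h => hij (Fin.ext h.symm)
        simp [hij, this]
    · intro k _ hk
      have : (i : ℕ) + 1 ≠ k := fun h => hk (Fin.ext h.symm)
      simp [this]
    · simp
  · -- The last row of `U` vanishes, and so does the factor `N - i` at `i = N`.
    have hN : (i : ℕ) = N := by omega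
    rw [Finset.sum_eq_zero]
    · simp [hN]
    · intro k _
      have : (i : ℕ) + 1 ≠ k := by omega
      simp [this]

lemma kacDown_mul_kacUp (N : ℕ) :
    kacDown N * kacUp N =
      Matrix.diagonal fun i : Fin (N + 1) => ((i : ℕ) : ℚ) * ((N : ℚ) - (i : ℕ) + 1) := by
  ext i j
  rw [Matrix.mul_apply, Matrix.diagonal_apply]
  simp only [kacUp, kacDown, Matrix.of_apply]
  by_cases hi : (i : ℕ) = 0
  · -- The first row of `L` vanishes, and so does the factor `i` at `i = 0`.
    rw [Finset.sum_eq_zero]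
    · simp [hi]
    · intro k _
      have : (k : ℕ) + 1 ≠ i := by omega
      simp [this]
  · obtain ⟨m, hm⟩ := Nat.exists_eq_succ_of_ne_zero hi
    rw [Finset.sum_eq_single (⟨m, by omega⟩ : Fin (N + 1))]
    · by_cases hij : i = j
      · subst hij; simp [hm]; ring
      · have : m + 1 ≠ (j : ℕ) := fun h => hij (Fin.ext (hm.trans h))
        simp [hij, this]
    · intro k _ hk
      have : (k : ℕ) + 1 ≠ i := fun h => hk (Fin.ext (by simp only; omega))
      simp [this]
    · simp

lemma kacUp_comm_kacDown (N : ℕ) : kacUp N * kacDown N - kacDown N * kacUp N = Lam N := by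
  rw [kacUp_mul_kacDown, kacDown_mul_kacUp, Matrix.diagonal_sub, Lam]
  congr 1
  ext i
  ring

lemma abar_eq_down_sub_up (N : ℕ) : Abar N = kacDown N - kacUp N := by
  have h : Kac N * Lam N - Lam N * Kac N =
      (kacUp N * Lam N - Lam N * kacUp N) + (kacDown N * Lam N - Lam N * kacDown N) := by
    rw [kac_eq_up_add_down]; noncomm_ring
  rw [Abar, h, kacUp_comm_lam, kacDown_comm_lam]
  module

/-- In an associative algebra, `sl₂`-type relations among three elements make their span closed
under the commutator. -/
lemma commutator_mem_span_of_relations {R : Type*} [Ring R] [Algebra ℚ R] {a b c : R}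
    (hab : a * b - b * a = (2 : ℚ) • c) (hbc : b * c - c * b = (2 : ℚ) • a)
    (hca : c * a - a * c = (-2 : ℚ) • b) {x y : R}
    (hx : x ∈ Submodule.span ℚ {a, b, c}) (hy : y ∈ Submodule.span ℚ {a, b, c}) :
    x * y - y * x ∈ Submodule.span ℚ {a, b, c} := by
  rw [Submodule.mem_span_triple] at hx hy ⊢
  obtain ⟨p', q', r', rfl⟩ := hy
  obtain ⟨p, q, r, rfl⟩ := hx
  -- The coefficients form the cross product of `(p, q, r)` and `(p', q', r')`, scaled by the
  -- structure constants.
  refine ⟨2 * (q * r' - r * q'), -2 * (r * p' - p * r'), 2 * (p * q' - q * p'), ?_⟩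
  have h : (p • a + q • b + r • c) * (p' • a + q' • b + r' • c)
      - (p' • a + q' • b + r' • c) * (p • a + q • b + r • c)
      = (p * q' - q * p') • (a * b - b * a) + (q * r' - r * q') • (b * c - c * b)
        + (r * p' - p * r') • (c * a - a * c) := by
    simp only [mul_add, add_mul, smul_mul_assoc, mul_smul_comm]
    module
  rw [h, hab, hbc, hca]
  module

/-- The triple `A, Ā, Λ` satisfies `[A,Ā] = 2Λ`, `[Ā,Λ] = 2A`, `[Λ,A] = −2Ā`;
hence its span is closed under the commutator bracket, forming a Lie algebra
(isomorphic to `sl(2,ℝ)`). -/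
theorem kac_sl2_relations (N : ℕ) (hN : 1 ≤ N) :
    (Kac N * Abar N - Abar N * Kac N = (2 : ℚ) • Lam N) ∧
    (Abar N * Lam N - Lam N * Abar N = (2 : ℚ) • Kac N) ∧
    (Lam N * Kac N - Kac N * Lam N = (-2 : ℚ) • Abar N) ∧
    (∀ X Y : Matrix (Fin (N + 1)) (Fin (N + 1)) ℚ,
      X ∈ Submodule.span ℚ {Kac N, Abar N, Lam N} →
      Y ∈ Submodule.span ℚ {Kac N, Abar N, Lam N} →
      X * Y - Y * X ∈ Submodule.span ℚ {Kac N, Abar N, Lam N}) := by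
  have hAB : Kac N * Abar N - Abar N * Kac N = (2 : ℚ) • Lam N := by
    rw [abar_eq_down_sub_up, kac_eq_up_add_down, ← kacUp_comm_kacDown, two_smul]
    noncomm_ring
  have hBL : Abar N * Lam N - Lam N * Abar N = (2 : ℚ) • Kac N := by
    have h : Abar N * Lam N - Lam N * Abar N =
        (kacDown N * Lam N - Lam N * kacDown N) - (kacUp N * Lam N - Lam N * kacUp N) := by
      rw [abar_eq_down_sub_up]; noncomm_ring
    rw [h, kacUp_comm_lam, kacDown_comm_lam, kac_eq_up_add_down]
    module
  have hLA : Lam N * Kac N - Kac N * Lam N = (-2 : ℚ) • Abar N := by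
    rw [Abar]
    module
  exact ⟨hAB, hBL, hLA, fun _ _ hX hY => commutator_mem_span_of_relations hAB hBL hLA hX hY⟩
end
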